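/- Let c ∈ (0,1), assume k_c > 0 satisfies a(k_c) = c, m'(k_c) ≠ 0, and m(k) ≠ 0 for all real k ∉ {−k_c, k_c}, let (Ψ_δ)_{δ>0} satisfy Assumption A with constant C_Ψ and I_δ = 0 for all δ > 0, and let R₀ be an unperturbed wave. Fix κ with 1/2 < κ < 1. Then there exists δ_κ > 0 such that the following holds for all 0 < δ < δ_κ: if R ∈ W^{2,∞}(ℝ) and μ ∈ ℝ satisfy M R = A²(Ψ'_δ ∘ R) + μ, R(0) = 0, the limit lim_{x→+∞}(R(x) − R₀(x)) exists, R(x) ≤ −δ for all x ≤ −δ^κ, and R(x) ≥ +δ for all x ≥ +δ^κ, then R = R₀ + S for every S ∈ X that is δ-admissible relative to R₀ and for which R₀ + S satisfies M(R₀ + S) = A²(Ψ'_δ ∘ (R₀ + S)) + μ' for some μ' ∈ ℝ; in particular all such correctors S coincide and R belongs to the family of waves provided by the existence result. -/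

import Mathlib

open MeasureTheory Real Filter Topology

/-- The averaging operator `(A F)(x) = ∫_{x-1/2}^{x+1/2} F(s) ds`. -/
noncomputable def Aop (F : ℝ → ℝ) : ℝ → ℝ := fun x => ∫ s in (x - 1/2)..(x + 1/2), F s

/-- The operator `M F = A(A F) - c² F`. -/
noncomputable def Mop (c : ℝ) (F : ℝ → ℝ) : ℝ → ℝ := fun x => Aop (Aop F) x - c ^ 2 * F x

/-- Membership in `W^{2,∞}(ℝ)`. -/
def IsW2inf (S : ℝ → ℝ) : Prop :=
  Differentiable ℝ S ∧ (∃ C : ℝ, ∀ x, |S x| ≤ C ∧ |deriv S x| ≤ C) ∧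
    ∃ K : NNReal, LipschitzWith K (deriv S)

/-- Assumption A for the family `(Ψ_δ)_{δ>0}` with constant `C_Ψ`. -/
def AssumptionA (Ψ : ℝ → ℝ → ℝ) (CΨ : ℝ) : Prop :=
  0 < CΨ ∧ ∀ δ : ℝ, 0 < δ →
    Ψ δ 0 = 0 ∧ ContDiff ℝ 2 (Ψ δ) ∧
    (∀ r : ℝ, δ ≤ |r| → deriv (Ψ δ) r = Real.sign r) ∧
    (∀ r : ℝ, |deriv (Ψ δ) r| ≤ CΨ) ∧
    (∀ r : ℝ, |deriv (deriv (Ψ δ)) r| ≤ CΨ / δ)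

/-- The quantity `I_δ = ½ ∫_ℝ (Ψ'_δ(r) − sgn r) dr`. -/
noncomputable def Idelta (Ψ : ℝ → ℝ → ℝ) (δ : ℝ) : ℝ :=
  (1 / 2) * ∫ r : ℝ, (deriv (Ψ δ) r - Real.sign r)

/-- An unperturbed wave `R₀`: a `W^{2,∞}` solution of `M R₀ = A²(sgn ∘ R₀) + μ₀` with
`R₀(0) = 0` which leaves a neighbourhood of `0` monotonically and stays away from `0`. -/
def UnperturbedWave (c : ℝ) (R₀ : ℝ → ℝ) : Prop :=
  IsW2inf R₀ ∧ R₀ 0 = 0 ∧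
  (∃ μ₀ : ℝ, ∀ x, Mop c R₀ x = Aop (Aop (fun y => Real.sign (R₀ y))) x + μ₀) ∧
  ∃ x₀ r₀ d₀ : ℝ, 0 < x₀ ∧ 0 < r₀ ∧ 0 < d₀ ∧
    (∀ x, x₀ < x → r₀ < R₀ x) ∧ (∀ x, x < -x₀ → R₀ x < -r₀) ∧
    (∀ x, |x| < x₀ → d₀ < deriv R₀ x)

/-- `δ`-admissibility of a corrector `S` relative to `R₀`. -/
def Admissible (δ : ℝ) (R₀ S : ℝ → ℝ) : Prop :=
  IsW2inf S ∧ S 0 = 0 ∧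
  ∃ xm xp : ℝ, xm < 0 ∧ 0 < xp ∧
    R₀ xm + S xm = -δ ∧ R₀ xp + S xp = δ ∧
    (∀ x, x < xm → R₀ x + S x < -δ) ∧
    (∀ x, xp < x → δ < R₀ x + S x) ∧
    (∀ x, xm < x → x < xp →
      deriv R₀ 0 / 2 < deriv R₀ x + deriv S x ∧ deriv R₀ x + deriv S x < 2 * deriv R₀ 0)

/-- The nonlinear superposition operator `G(S)(x) = Ψ'_δ(R₀(x)+S(x)) − sgn(R₀(x))`. -/
noncomputable def Gop (Ψ : ℝ → ℝ → ℝ) (δ : ℝ) (R₀ S : ℝ → ℝ) : ℝ → ℝ :=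
  fun x => deriv (Ψ δ) (R₀ x + S x) - Real.sign (R₀ x)

/-- The symbol `a(k) = sin(k/2)/(k/2)`, with `a(0) = 1`. -/
noncomputable def symb (k : ℝ) : ℝ := if k = 0 then 1 else Real.sin (k / 2) / (k / 2)

/-- The symbol `m(k) = a(k)² - c²`. -/
noncomputable def msymb (c : ℝ) : ℝ → ℝ := fun k => (symb k) ^ 2 - c ^ 2

/-- The space `X` of `S ∈ W^{2,∞}(ℝ)` with `S(0) = 0` such that `lim_{x→+∞} S(x)` exists. -/
def IsX (S : ℝ → ℝ) : Prop := IsW2inf S ∧ S 0 = 0 ∧ ∃ l : ℝ, Tendsto S atTop (nhds l)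

/-!
The difference `D` of two waves solves the linear equation `M D = A² G + ν`, whose source `G`, the
difference of the nonlinear terms, is supported where a wave crosses the spinodal region; after
subtracting its limit at `+∞`, `D` solves `M D = A² G`. Since `m` has only the simple real roots
`± k_c`, dividing `k_c² - k²` by `m(k)` on a large bounded frequency range produces kernels `g`, `h`
with `g'' + k_c² g = M h` and `∫ g = 1`. The low-frequency part `g ⋆ D` therefore solves an
oscillator equation with source `h ⋆ A² G ∈ L¹`, and Duhamel's formula from `+∞` bounds it by
`‖G‖₁`. The remainder `D - g ⋆ D` is small relative to the Lipschitz constant of `D`, which the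
equation bounds by `‖D‖_∞ + ‖G‖₁` because `A²` is smoothing, so it can be absorbed. The result is
that `D` is Lipschitz with a constant proportional to `‖G‖₁`.

Both waves vanish at `0` and `G` is supported in `[-δ^κ, δ^κ]`, where `|D|` is thus at most a
multiple of `δ^κ ‖G‖₁`. As `Ψ'_δ` has Lipschitz constant `C_Ψ / δ`, integration over the support
gives `‖G‖₁ ≤ C δ^(2κ - 1) ‖G‖₁`. For `κ > 1/2` and small `δ` this forces `G = 0`, hence `D = 0`.
For `κ < 1` and small `δ`, an admissible `R₀ + S` crosses inside `[-δ^κ, δ^κ]`, because its slope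
there exceeds `R₀'(0) / 2`.
-/

section Convolution

open scoped Convolution

variable {f g F : ℝ → ℝ} {B : ℝ}

lemma convolutionExists_of_bounded (hg : Integrable g) (hF : Continuous F)
    (hB : ∀ x, |F x| ≤ B) : ConvolutionExists g F (ContinuousLinearMap.lsmul ℝ ℝ) :=
  fun x => hg.mul_bdd (by fun_prop) (ae_of_all _ fun t => hB (x - t))

lemma continuous_convolution_of_bounded (hg : Integrable g) (hF : Continuous F)
    (hB : ∀ x, |F x| ≤ B) : Continuous (g ⋆ F) :=
  BddAbove.continuous_convolution_right_of_integrable _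
    ⟨B, Set.forall_mem_range.2 hB⟩ hg hF

lemma convolution_lsmul_comm (f g : ℝ → ℝ) : f ⋆ g = g ⋆ f := by
  ext x
  simp only [convolution_lsmul_swap (f := f), convolution_lsmul (f := g), smul_eq_mul, mul_comm]

lemma convolution_assoc_of_bounded (hf : Integrable f) (hg : Integrable g) (hF : Continuous F)
    (hB : ∀ x, |F x| ≤ B) : (f ⋆ g) ⋆ F = f ⋆ (g ⋆ F) := by
  ext x
  refine convolution_assoc' _ _ _ _ (fun a b c => mul_assoc a b c)
    (hf.ae_convolution_exists _ hg)
    (ae_of_all _ (convolutionExists_of_bounded hg hF hB)) ?_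
  simpa only [Function.uncurry_def, ContinuousLinearMap.lsmul_apply, smul_eq_mul, mul_assoc]
    using (hf.convolution_integrand (ContinuousLinearMap.lsmul ℝ ℝ) hg).mul_bdd
      (g := fun p => F (x - p.1)) (by fun_prop) (ae_of_all _ fun p => hB (x - p.1))

lemma tendsto_convolution_atTop (hg : Integrable g) (hF : Continuous F) (hB : ∀ x, |F x| ≤ B)
    (h : Tendsto F atTop (𝓝 0)) : Tendsto (g ⋆ F) atTop (𝓝 0) := by
  have hdom : Tendsto (fun x => ∫ t, g t * F (x - t)) atTop (𝓝 (∫ _t : ℝ, (0 : ℝ))) := by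
    refine tendsto_integral_filter_of_dominated_convergence (fun t => |g t| * B)
      (.of_forall fun x => (convolutionExists_of_bounded hg hF hB x).aestronglyMeasurable)
      (.of_forall fun x => ae_of_all _ fun t => ?_) (hg.abs.mul_const B)
      (ae_of_all _ fun t => ?_)
    · rw [Real.norm_eq_abs, abs_mul]
      exact mul_le_mul_of_nonneg_left (hB _) (abs_nonneg _)
    · simpa only [mul_zero, Function.comp_def, id, ← sub_eq_add_neg] using
        (h.comp (tendsto_atTop_add_const_right atTop (-t) tendsto_id)).const_mul (g t)
  rwa [integral_zero] at hdom

lemma integral_abs_convolution_le (hf : Integrable f) (hg : Integrable g) :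
    ∫ x, |(f ⋆ g) x| ≤ (∫ x, |f x|) * ∫ x, |g x| := by
  have habs : ∫ x, ((fun y => |f y|) ⋆ fun y => |g y|) x = (∫ x, |f x|) * ∫ x, |g x| :=
    integral_convolution _ hf.abs hg.abs
  rw [← habs]
  refine integral_mono (hf.integrable_convolution _ hg).abs
    (hf.abs.integrable_convolution _ hg.abs) fun x => ?_
  simpa only [convolution_lsmul, smul_eq_mul, abs_mul] using
    abs_integral_le_integral_abs (f := fun t => f t * g (x - t))

lemma abs_convolution_sub_self_le (hg : Integrable g) (hg1 : ∫ y, g y = 1)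
    (hmom : Integrable fun y => |y| * |g y|) (hF : Continuous F) (hB : ∀ x, |F x| ≤ B) {L : ℝ}
    (hL : ∀ x y, |F x - F y| ≤ L * |x - y|) (x : ℝ) :
    |(g ⋆ F) x - F x| ≤ L * ∫ y, |y| * |g y| := by
  have hconv : Integrable fun t => g t * F (x - t) := convolutionExists_of_bounded hg hF hB x
  have hdiff : (g ⋆ F) x - F x = ∫ t, g t * (F (x - t) - F x) := by
    simp only [mul_sub]
    rw [integral_sub hconv (hg.mul_const _), integral_mul_const, hg1, one_mul]
    rfl
  rw [hdiff, ← integral_const_mul]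
  refine norm_integral_le_of_norm_le (f := fun t => g t * (F (x - t) - F x)) (hmom.const_mul L)
    (ae_of_all _ fun t => ?_)
  calc |g t * (F (x - t) - F x)| = |g t| * |F (x - t) - F x| := abs_mul _ _
    _ ≤ |g t| * (L * |x - t - x|) := by gcongr; exact hL _ _
    _ = L * (|t| * |g t|) := by rw [sub_sub_cancel_left, abs_neg]; ring

lemma integrable_indicator_Ioc_one (a b : ℝ) :
    Integrable ((Set.Ioc a b).indicator (1 : ℝ → ℝ)) :=
  (integrable_indicator_iff measurableSet_Ioc).2 (integrableOn_const (by simp))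

lemma indicator_Ioc_convolution {a b : ℝ} (hab : a ≤ b) (F : ℝ → ℝ) (x : ℝ) :
    ((Set.Ioc a b).indicator (1 : ℝ → ℝ) ⋆ F) x = ∫ s in (x - b)..(x - a), F s := by
  have hind : ∀ t, (Set.Ioc a b).indicator (1 : ℝ → ℝ) t • F (x - t)
      = (Set.Ioc a b).indicator (fun t => F (x - t)) t := fun t => by
    by_cases ht : t ∈ Set.Ioc a b <;> simp [ht]
  simp only [convolution_lsmul, hind]
  rw [integral_indicator measurableSet_Ioc, ← intervalIntegral.integral_of_le hab,
    intervalIntegral.integral_comp_sub_left]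

lemma convolution_intervalIntegral_left (hg : Integrable g) (hF : Continuous F)
    (hB : ∀ x, |F x| ≤ B) {a b : ℝ} (hab : a ≤ b) (x : ℝ) :
    ((fun y => ∫ s in (y - b)..(y - a), g s) ⋆ F) x = ∫ s in (x - b)..(x - a), (g ⋆ F) s := by
  simp only [← indicator_Ioc_convolution hab]
  exact congrFun (convolution_assoc_of_bounded (integrable_indicator_Ioc_one a b) hg hF hB) x

lemma convolution_comp_sub_right (g F : ℝ → ℝ) (h x : ℝ) :
    ((fun y => g (y - h)) ⋆ F) x = (g ⋆ F) (x - h) := by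
  simp only [convolution_lsmul]
  rw [← integral_add_right_eq_self _ h]
  simp only [add_sub_cancel_right, sub_sub, add_comm h]

lemma hasDerivAt_convolution_of_bounded {g' : ℝ → ℝ} (hg : Integrable g) (hg' : Integrable g')
    (hderiv : ∀ x, HasDerivAt g (g' x) x) (hF : Continuous F) (hB : ∀ x, |F x| ≤ B) (x : ℝ) :
    HasDerivAt (g ⋆ F) ((g' ⋆ F) x) x := by
  have hincr : ∀ h, 0 ≤ h → ∀ y,
      (g ⋆ F) y = (g ⋆ F) (y - h) + ∫ s in (y - h)..y, (g' ⋆ F) s := fun h hh y => by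
    have hshift : Integrable fun z => g (z - h) := hg.comp_sub_right h
    have hFTC : (fun z => ∫ s in (z - h)..(z - 0), g' s) = g - fun z => g (z - h) := funext fun z =>
      (intervalIntegral.integral_eq_sub_of_hasDerivAt (fun s _ => hderiv s)
        hg'.intervalIntegrable).trans (by simp only [sub_zero, Pi.sub_apply])
    have hwindow := convolution_intervalIntegral_left hg' hF hB hh y
    have hsplit := (convolutionExists_of_bounded hshift hF hB y).add_distrib
      (convolutionExists_of_bounded (hg.sub hshift) hF hB y)
    rwa [add_sub_cancel, convolution_comp_sub_right, ← hFTC, hwindow, sub_zero] at hsplit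
  have hprim := ((continuous_convolution_of_bounded hg' hF hB).integral_hasStrictDerivAt
    (x - 1) x).hasDerivAt.const_add ((g ⋆ F) (x - 1))
  refine hprim.congr_of_eventuallyEq ?_
  filter_upwards [lt_mem_nhds (sub_one_lt x)] with y hy
  rw [hincr (y - (x - 1)) (sub_nonneg.2 hy.le) y, sub_sub_cancel]

end Convolution

section Averaging

open scoped Convolution

variable {F G g : ℝ → ℝ} {B : ℝ}

lemma Aop_eq_convolution (F : ℝ → ℝ) :
    Aop F = (Set.Ioc (-1 / 2) (1 / 2)).indicator (1 : ℝ → ℝ) ⋆ F := by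
  ext x
  rw [indicator_Ioc_convolution (by norm_num), neg_div, sub_neg_eq_add, Aop]

lemma hasDerivAt_Aop (hF : Continuous F) (x : ℝ) :
    HasDerivAt (Aop F) (F (x + 1 / 2) - F (x - 1 / 2)) x := by
  have hprim : ∀ y, HasDerivAt (fun u => ∫ s in (0 : ℝ)..u, F s) (F y) y := fun y =>
    (hF.integral_hasStrictDerivAt 0 y).hasDerivAt
  have hAop : Aop F = fun u =>
      (∫ s in (0 : ℝ)..(u + 1 / 2), F s) - ∫ s in (0 : ℝ)..(u - 1 / 2), F s :=
    funext fun u => (intervalIntegral.integral_interval_sub_left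
      (hF.intervalIntegrable _ _) (hF.intervalIntegrable _ _)).symm
  rw [hAop]
  exact ((hprim _).comp_add_const x (1 / 2)).sub ((hprim _).comp_sub_const x (1 / 2))

lemma continuous_Aop (hF : Continuous F) : Continuous (Aop F) :=
  continuous_iff_continuousAt.2 fun x => (hasDerivAt_Aop hF x).continuousAt

lemma abs_Aop_sub_Aop_le (hF : Continuous F) (hB : ∀ x, |F x| ≤ B) (x y : ℝ) :
    |Aop F x - Aop F y| ≤ 2 * B * |x - y| := by
  refine convex_univ.norm_image_sub_le_of_norm_hasDerivWithin_le
    (fun z _ => (hasDerivAt_Aop hF z).hasDerivWithinAt) (fun z _ => ?_)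
    (Set.mem_univ y) (Set.mem_univ x)
  calc |F (z + 1 / 2) - F (z - 1 / 2)| ≤ |F (z + 1 / 2)| + |F (z - 1 / 2)| := abs_sub _ _
    _ ≤ 2 * B := by linarith [hB (z + 1 / 2), hB (z - 1 / 2)]

lemma abs_Aop_le {x : ℝ} (hB : ∀ y, x - 1 / 2 ≤ y → |F y| ≤ B) : |Aop F x| ≤ B := by
  have hx : x - 1 / 2 ≤ x + 1 / 2 := by linarith
  have hbound : ∀ y ∈ Set.uIoc (x - 1 / 2) (x + 1 / 2), ‖F y‖ ≤ B := fun y hy => by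
    rw [Set.uIoc_of_le hx] at hy
    exact hB y hy.1.le
  calc |Aop F x| ≤ B * |x + 1 / 2 - (x - 1 / 2)| :=
        intervalIntegral.norm_integral_le_of_norm_le_const hbound
    _ = B := by norm_num

lemma tendsto_Aop_atTop (h : Tendsto F atTop (𝓝 0)) : Tendsto (Aop F) atTop (𝓝 0) := by
  rw [Metric.tendsto_atTop] at h ⊢
  intro ε hε
  obtain ⟨N, hN⟩ := h (ε / 2) (half_pos hε)
  refine ⟨N + 1 / 2, fun x hx => ?_⟩
  rw [Real.dist_eq, sub_zero]
  refine (abs_Aop_le (B := ε / 2) fun y hy => ?_).trans_lt (half_lt_self hε)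
  simpa [Real.dist_eq] using (hN y (by linarith)).le

lemma abs_Aop_le_integral_abs (hF : Integrable F) (x : ℝ) : |Aop F x| ≤ ∫ y, |F y| :=
  calc |Aop F x| ≤ ∫ y in Set.uIoc (x - 1 / 2) (x + 1 / 2), |F y| :=
        intervalIntegral.norm_integral_le_integral_norm_uIoc (f := F)
    _ ≤ ∫ y, |F y| := setIntegral_le_integral hF.abs (ae_of_all _ fun _ => abs_nonneg _)

lemma integrable_Aop (hF : Integrable F) : Integrable (Aop F) := by
  rw [Aop_eq_convolution]
  exact (integrable_indicator_Ioc_one _ _).integrable_convolution _ hF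

lemma integral_abs_Aop_le (hF : Integrable F) : ∫ x, |Aop F x| ≤ ∫ x, |F x| := by
  have hwindow : ∫ x, |(Set.Ioc (-1 / 2) (1 / 2)).indicator (1 : ℝ → ℝ) x| = 1 := by
    have habs : ∀ x, |(Set.Ioc (-1 / 2) (1 / 2)).indicator (1 : ℝ → ℝ) x|
        = (Set.Ioc (-1 / 2) (1 / 2)).indicator (1 : ℝ → ℝ) x := fun x =>
      abs_of_nonneg (Set.indicator_nonneg (fun _ _ => zero_le_one) x)
    simp only [habs]
    rw [integral_indicator_one measurableSet_Ioc, Real.volume_real_Ioc]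
    norm_num
  rw [Aop_eq_convolution]
  refine (integral_abs_convolution_le (integrable_indicator_Ioc_one _ _) hF).trans_eq ?_
  rw [hwindow, one_mul]

lemma convolution_Aop (hg : Integrable g) (hF : Continuous F) (hB : ∀ x, |F x| ≤ B) :
    g ⋆ Aop F = Aop g ⋆ F := by
  have hχ := integrable_indicator_Ioc_one (-1 / 2) (1 / 2)
  rw [Aop_eq_convolution, Aop_eq_convolution, ← convolution_lsmul_comm g,
    convolution_assoc_of_bounded hg hχ hF hB]

lemma Aop_sub (hF : Continuous F) (hG : Continuous G) :
    Aop (fun y => F y - G y) = fun x => Aop F x - Aop G x :=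
  funext fun _ => intervalIntegral.integral_sub (hF.intervalIntegrable _ _)
    (hG.intervalIntegrable _ _)

lemma Aop_const (l : ℝ) : Aop (fun _ => l) = fun _ => l := by
  ext x
  rw [Aop, intervalIntegral.integral_const, add_sub_sub_cancel, add_halves, one_smul]

lemma Mop_sub (c : ℝ) (hF : Continuous F) (hG : Continuous G) :
    Mop c (fun y => F y - G y) = fun x => Mop c F x - Mop c G x := by
  ext x
  simp only [Mop, Aop_sub hF hG, Aop_sub (continuous_Aop hF) (continuous_Aop hG)]
  ring

lemma Mop_const (c l : ℝ) : Mop c (fun _ => l) = fun _ => (1 - c ^ 2) * l := by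
  ext x
  simp only [Mop, Aop_const]
  ring

lemma tendsto_Mop_atTop (c : ℝ) (h : Tendsto F atTop (𝓝 0)) : Tendsto (Mop c F) atTop (𝓝 0) := by
  have hsub := (tendsto_Aop_atTop (tendsto_Aop_atTop h)).sub (h.const_mul (c ^ 2))
  rwa [mul_zero, sub_zero] at hsub

lemma convolution_Mop (c : ℝ) (hg : Integrable g) (hF : Continuous F) (hB : ∀ x, |F x| ≤ B) :
    g ⋆ Mop c F = Mop c g ⋆ F := by
  have hAB : ∀ x, |Aop F x| ≤ B := fun x => abs_Aop_le fun y _ => hB y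
  have hAAB : ∀ x, |Aop (Aop F) x| ≤ B := fun x => abs_Aop_le fun y _ => hAB y
  have hAA : g ⋆ Aop (Aop F) = Aop (Aop g) ⋆ F :=
    (convolution_Aop hg (continuous_Aop hF) hAB).trans (convolution_Aop (integrable_Aop hg) hF hB)
  have hMop : ∀ H : ℝ → ℝ, Mop c H = Aop (Aop H) + (-c ^ 2) • H := fun H => by
    ext x
    simp only [Mop, Pi.add_apply, Pi.smul_apply, smul_eq_mul]
    ring
  have hcB : ∀ x, |((-c ^ 2) • F) x| ≤ |-c ^ 2| * B := fun x => by
    rw [Pi.smul_apply, smul_eq_mul, abs_mul]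
    exact mul_le_mul_of_nonneg_left (hB x) (abs_nonneg _)
  have hgA := integrable_Aop (integrable_Aop hg)
  rw [hMop F, hMop g,
    (convolutionExists_of_bounded hg (continuous_Aop (continuous_Aop hF)) hAAB).distrib_add
      (convolutionExists_of_bounded hg (hF.const_smul _) hcB),
    (convolutionExists_of_bounded hgA hF hB).add_distrib
      (convolutionExists_of_bounded (hg.smul (-c ^ 2)) hF hB),
    convolution_smul, smul_convolution, hAA]

end Averaging

-- Duhamel's formula from `+∞`: `k W(x) = ∫_x^∞ sin (k (y - x)) f(y) dy`.
lemma abs_le_of_oscillator {k : ℝ} (hk : 0 < k) {W W' f : ℝ → ℝ} (hf : Integrable f)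
    (hW : ∀ x, HasDerivAt W (W' x) x) (hW' : ∀ x, HasDerivAt W' (f x - k ^ 2 * W x) x)
    (hW0 : Tendsto W atTop (𝓝 0)) (hW'0 : Tendsto W' atTop (𝓝 0)) (x : ℝ) :
    |W x| ≤ (∫ y, |f y|) / k := by
  set Z : ℝ → ℝ := fun y => k * W y * cos (k * (y - x)) - W' y * sin (k * (y - x)) with hZ
  have hZ' : ∀ y, HasDerivAt Z (-(sin (k * (y - x)) * f y)) y := fun y => by
    have hphase : HasDerivAt (fun y => k * (y - x)) k y := by
      simpa using ((hasDerivAt_id y).sub_const x).const_mul k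
    refine ((((hW y).const_mul k).mul hphase.cos).sub ((hW' y).mul hphase.sin)).congr_deriv ?_
    ring
  have hZ0 : Tendsto Z atTop (𝓝 0) := by
    have hkW := hW0.const_mul k
    rw [mul_zero] at hkW
    simpa only [sub_zero] using
      (hkW.zero_mul_isBoundedUnder_le (isBoundedUnder_of ⟨1, fun y => abs_cos_le_one _⟩)).sub
        (hW'0.zero_mul_isBoundedUnder_le (isBoundedUnder_of ⟨1, fun y => abs_sin_le_one _⟩))
  have hint : Integrable fun y => sin (k * (y - x)) * f y :=
    hf.bdd_mul (c := 1) (by fun_prop) (ae_of_all _ fun y => abs_sin_le_one _)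
  have hle : ∀ y, |sin (k * (y - x)) * f y| ≤ |f y| := fun y =>
    (abs_mul _ _).trans_le (mul_le_of_le_one_left (abs_nonneg _) (abs_sin_le_one _))
  have hduhamel : k * W x = ∫ y in Set.Ioi x, sin (k * (y - x)) * f y := by
    have hFTC := integral_Ioi_of_hasDerivAt_of_tendsto' (a := x) (fun y _ => hZ' y)
      hint.neg.integrableOn hZ0
    rw [integral_neg] at hFTC
    simpa [hZ] using hFTC.symm
  rw [le_div_iff₀ hk]
  calc |W x| * k = |k * W x| := by rw [abs_mul, abs_of_pos hk, mul_comm]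
    _ = |∫ y in Set.Ioi x, sin (k * (y - x)) * f y| := by rw [hduhamel]
    _ ≤ ∫ y in Set.Ioi x, |sin (k * (y - x)) * f y| := abs_integral_le_integral_abs
    _ ≤ ∫ y in Set.Ioi x, |f y| :=
        integral_mono hint.abs.integrableOn hf.abs.integrableOn hle
    _ ≤ ∫ y, |f y| := setIntegral_le_integral hf.abs (ae_of_all _ fun _ => abs_nonneg _)

section Symbol

open scoped ContDiff

lemma analyticAt_dslope {𝕜 E : Type*} [NontriviallyNormedField 𝕜] [NormedAddCommGroup E]
    [NormedSpace 𝕜 E] {f : 𝕜 → E} {x : 𝕜} (hf : AnalyticAt 𝕜 f x) (a : 𝕜) :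
    AnalyticAt 𝕜 (dslope f a) x := by
  rcases eq_or_ne x a with rfl | hx
  · obtain ⟨p, hp⟩ := hf
    exact ⟨_, hp.has_fpower_series_dslope_fslope⟩
  · refine AnalyticAt.congr ?_ (dslope_eventuallyEq_slope_of_ne f hx).symm
    exact ((analyticAt_id.sub analyticAt_const).inv (sub_ne_zero.2 hx)).smul
      (hf.sub analyticAt_const)

lemma exists_analytic_eq_sq_sub_sq_mul {f : ℝ → ℝ} (hf : AnalyticOnNhd ℝ f Set.univ) {p : ℝ}
    (hp : p ≠ 0) (hfp : f p = 0) (hfn : f (-p) = 0) :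
    ∃ u : ℝ → ℝ, AnalyticOnNhd ℝ u Set.univ ∧ f = fun x => (x ^ 2 - p ^ 2) * u x := by
  have hfg : ∀ x, (x - p) * dslope f p x = f x := sub_smul_dslope_of_zero hfp
  have hgn : dslope f p (-p) = 0 := by
    have hprod := hfg (-p)
    rw [hfn, mul_eq_zero] at hprod
    exact hprod.resolve_left fun h => hp (by linarith)
  refine ⟨dslope (dslope f p) (-p),
    fun x hx => analyticAt_dslope (analyticAt_dslope (hf x hx) _) _, funext fun x => ?_⟩
  have hgu : (x - -p) * dslope (dslope f p) (-p) x = dslope f p x := sub_smul_dslope_of_zero hgn x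
  rw [← hfg, ← hgu]
  ring

lemma exists_analytic_mul_eq_sq_sub_sq {f : ℝ → ℝ} (hf : AnalyticOnNhd ℝ f Set.univ)
    (heven : ∀ x, f (-x) = f x) {p : ℝ} (hp : p ≠ 0) (hfp : f p = 0) (hf' : deriv f p ≠ 0)
    (hroots : ∀ x, x ≠ p → x ≠ -p → f x ≠ 0) :
    ∃ v : ℝ → ℝ, AnalyticOnNhd ℝ v Set.univ ∧ ∀ x, v x * f x = p ^ 2 - x ^ 2 := by
  obtain ⟨u, hu, hfu⟩ := exists_analytic_eq_sq_sub_sq_mul hf hp hfp ((heven p).trans hfp)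
  have hderiv : ∀ x, x ^ 2 = p ^ 2 → deriv f x = 2 * x * u x := fun x hx => by
    have hprod : HasDerivAt f (2 * x * u x + (x ^ 2 - p ^ 2) * deriv u x) x := by
      rw [hfu]
      refine (((hasDerivAt_pow 2 x).sub_const (p ^ 2)).mul
        (hu x trivial).differentiableAt.hasDerivAt).congr_deriv ?_
      norm_num
    rw [hprod.deriv, hx, sub_self, zero_mul, add_zero]
  have hderiv_neg : deriv f (-p) = -deriv f p := by
    rw [← neg_eq_iff_eq_neg, ← deriv_comp_neg f p, funext heven]
  have hune : ∀ x, u x ≠ 0 := fun x hux => by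
    by_cases hxp : x = p
    · exact hf' (by rw [hderiv p rfl, ← hxp, hux, mul_zero])
    by_cases hxn : x = -p
    · refine hf' ?_
      rw [← neg_eq_zero, ← hderiv_neg, hderiv (-p) (neg_sq p), ← hxn, hux, mul_zero]
    · refine hroots x hxp hxn ?_
      simp only [hfu, hux, mul_zero]
  refine ⟨fun x => -(u x)⁻¹, fun x hx => ((hu x hx).inv (hune x)).neg, fun x => ?_⟩
  simp only [hfu]
  field_simp [hune x]
  ring

lemma symb_eq_sinc (k : ℝ) : symb k = sinc (k / 2) := by
  simp [symb, sinc_apply]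

lemma analyticOnNhd_symb : AnalyticOnNhd ℝ symb Set.univ := fun k _ => by
  have hsinc : AnalyticAt ℝ sinc (k / 2) := by
    rw [sinc_eq_dslope]
    exact analyticAt_dslope (analyticOnNhd_sin _ (Set.mem_univ _)) 0
  rw [funext symb_eq_sinc]
  exact hsinc.comp (f := fun k : ℝ => k / 2) (by fun_prop)

lemma exists_contDiff_mul_msymb_eq {c p : ℝ} (hp : p ≠ 0) (hmp : msymb c p = 0)
    (hm' : deriv (msymb c) p ≠ 0) (hroots : ∀ k, k ≠ p → k ≠ -p → msymb c k ≠ 0) :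
    ∃ v : ℝ → ℝ, ContDiff ℝ ∞ v ∧ ∀ k, v k * msymb c k = p ^ 2 - k ^ 2 := by
  have hm : AnalyticOnNhd ℝ (msymb c) Set.univ := fun k hk =>
    ((analyticOnNhd_symb k hk).pow 2).sub analyticAt_const
  have heven : ∀ k, msymb c (-k) = msymb c k := fun k => by
    simp only [msymb, symb_eq_sinc, neg_div, sinc_neg]
  obtain ⟨v, hv, hvm⟩ := exists_analytic_mul_eq_sq_sub_sq hm heven hp hmp hm' hroots
  exact ⟨v, (contDiffOn_univ.1 hv.contDiffOn_of_completeSpace), hvm⟩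

end Symbol

section Fourier

open scoped FourierTransform SchwartzMap ContDiff

lemma intervalIntegral_fourierChar (v y : ℝ) :
    ∫ s in (y - 1 / 2)..(y + 1 / 2), (𝐞 (-(v * s)) : ℂ) = symb (2 * π * v) * 𝐞 (-(v * y)) := by
  have hcentred : ∫ t in (-(1 / 2) : ℝ)..(1 / 2), (𝐞 (-(v * t)) : ℂ) = symb (2 * π * v) := by
    rcases eq_or_ne v 0 with rfl | hv
    · norm_num [symb]
    have hv' : (v : ℂ) ≠ 0 := Complex.ofReal_ne_zero.2 hv
    have hscale : (-(2 * π * v)) ≠ 0 := by simp [hv, pi_ne_zero]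
    have hexp : ∀ t : ℝ, (𝐞 (-(v * t)) : ℂ)
        = Complex.exp ((-(2 * π * v) * t : ℝ) * Complex.I) := fun t => by
      rw [fourierChar_apply]
      ring_nf
    simp only [hexp]
    rw [intervalIntegral.integral_comp_mul_left
      (fun u : ℝ => Complex.exp (u * Complex.I)) hscale, mul_neg, integral_exp_mul_I_eq_sinc,
      symb_eq_sinc, Complex.real_smul, ← sinc_neg]
    push_cast
    field_simp
  have hshift : ∀ t : ℝ, (𝐞 (-(v * (y + t))) : ℂ) = 𝐞 (-(v * t)) * 𝐞 (-(v * y)) := fun t => by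
    rw [mul_add, neg_add_rev, AddChar.map_add_eq_mul, Circle.coe_mul]
  rw [sub_eq_add_neg, ← intervalIntegral.integral_comp_add_left (fun s => (𝐞 (-(v * s)) : ℂ)) y]
  simp only [hshift, intervalIntegral.integral_mul_const, hcentred]

lemma intervalIntegral_fourier {b : ℝ → ℂ} (hb : Integrable b) (y : ℝ) :
    ∫ s in (y - 1 / 2)..(y + 1 / 2), 𝓕 b s = 𝓕 (fun v => symb (2 * π * v) * b v) y := by
  have : IsFiniteMeasure (volume.restrict (Set.uIoc (y - 1 / 2) (y + 1 / 2))) :=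
    inferInstanceAs (IsFiniteMeasure (volume.restrict (Set.Ioc _ _)))
  have hswap : Integrable (Function.uncurry fun s v : ℝ => 𝐞 (-(v * s)) • b v)
      ((volume.restrict (Set.uIoc (y - 1 / 2) (y + 1 / 2))).prod volume) := by
    have hb' : Integrable (fun z : ℝ × ℝ => b z.2)
        ((volume.restrict (Set.uIoc (y - 1 / 2) (y + 1 / 2))).prod volume) :=
      hb.comp_snd _
    refine hb'.bdd_mul (c := 1) (f := fun z : ℝ × ℝ => (𝐞 (-(z.2 * z.1)) : ℂ)) ?_
      (ae_of_all _ fun z => (Circle.norm_coe _).le)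
    exact (by fun_prop : Continuous fun z : ℝ × ℝ => (𝐞 (-(z.2 * z.1)) : ℂ)).aestronglyMeasurable
  simp only [fourier_real_eq]
  rw [intervalIntegral_integral_swap hswap]
  congr 1 with v
  simp only [Circle.smul_def, smul_eq_mul, intervalIntegral.integral_mul_const,
    intervalIntegral_fourierChar]
  ring

lemma fourier_add_smul {f g : ℝ → ℂ} (hf : Integrable f) (hg : Integrable g) (r : ℂ) :
    𝓕 (f + r • g) = 𝓕 f + r • 𝓕 g :=
  (VectorFourier.fourierIntegral_add continuous_fourierChar continuous_inner hf (hg.smul r)).trans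
    (congrArg _ (VectorFourier.fourierIntegral_const_smul _ _ _ g r))

lemma integrable_symb_mul {b : ℝ → ℂ} (hb : Integrable b) :
    Integrable fun v => (symb (2 * π * v) : ℂ) * b v := by
  simp only [symb_eq_sinc]
  refine hb.bdd_mul (c := 1) ?_ (ae_of_all _ fun v => ?_)
  · exact (Complex.continuous_ofReal.comp
      (continuous_sinc.comp (by fun_prop))).aestronglyMeasurable
  · rw [Complex.norm_real]
    exact abs_sinc_le_one _

lemma Aop_re_fourier {b : ℝ → ℂ} (hb : Integrable b) :
    Aop (fun y => (𝓕 b y).re) = fun y => (𝓕 (fun v => symb (2 * π * v) * b v) y).re := by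
  ext y
  have hcont : Continuous (𝓕 b) :=
    VectorFourier.fourierIntegral_continuous continuous_fourierChar continuous_inner hb
  rw [← intervalIntegral_fourier hb, Aop]
  exact Complex.reCLM.intervalIntegral_comp_comm (hcont.intervalIntegrable _ _)

lemma Mop_re_fourier (c : ℝ) {b : ℝ → ℂ} (hb : Integrable b) (y : ℝ) :
    Mop c (fun y => (𝓕 b y).re) y = (𝓕 (fun v => msymb c (2 * π * v) * b v) y).re := by
  have hbb := integrable_symb_mul (integrable_symb_mul hb)
  have hsplit : (fun v => (msymb c (2 * π * v) : ℂ) * b v)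
      = (fun v => (symb (2 * π * v) : ℂ) * (symb (2 * π * v) * b v)) + (-(c : ℂ) ^ 2) • b := by
    ext v
    simp only [msymb, Pi.add_apply, Pi.smul_apply, smul_eq_mul]
    push_cast
    ring
  rw [Mop, Aop_re_fourier hb, Aop_re_fourier (integrable_symb_mul hb), hsplit,
    fourier_add_smul hbb hb]
  simp only [Pi.add_apply, Pi.smul_apply, smul_eq_mul, Complex.add_re, ← Complex.ofReal_pow,
    ← Complex.ofReal_neg, Complex.re_ofReal_mul]
  ring

lemma integral_fourier (b : 𝓢(ℝ, ℂ)) : ∫ y, 𝓕 b y = b 0 := by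
  have hinv := congrFun
    (b.continuous.fourierInv_fourier_eq b.integrable (𝓕 b : 𝓢(ℝ, ℂ)).integrable) 0
  rw [fourierInv_eq] at hinv
  simpa [SchwartzMap.fourier_coe] using hinv

lemma fourier_comp_div (b : ℝ → ℂ) {K : ℝ} (hK : 0 < K) (y : ℝ) :
    𝓕 (fun v => b (v / K)) y = K * 𝓕 b (K * y) := by
  have hscale := Measure.integral_comp_div (fun w : ℝ => 𝐞 (-(w * (K * y))) • b w) K
  rw [abs_of_pos hK, Complex.real_smul, ← fourier_real_eq] at hscale
  rw [← hscale, fourier_real_eq]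
  congr! 5 with v
  field_simp

lemma deriv_deriv_fourier (b : 𝓢(ℝ, ℂ)) :
    deriv (deriv (𝓕 (b : ℝ → ℂ))) = 𝓕 fun v : ℝ => -(2 * π * v : ℂ) ^ 2 * b v := by
  have hmom : ∀ n : ℕ, n ≤ (⊤ : ℕ∞) → Integrable fun x : ℝ => x ^ n • b x := fun n _ => by
    have hmeas : Continuous fun x : ℝ => x ^ n • b x := by fun_prop
    refine (integrable_norm_iff hmeas.aestronglyMeasurable).1 ?_
    simpa only [norm_smul, norm_pow] using b.integrable_pow_mul volume n
  have hderiv := iteratedDeriv_fourier hmom (n := 2) le_top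
  rw [iteratedDeriv_succ, iteratedDeriv_one] at hderiv
  rw [hderiv]
  congr with v
  rw [smul_eq_mul]
  linear_combination (2 * π * v : ℂ) ^ 2 * b v * Complex.I_sq

/-- The real part of the Fourier transform of a Schwartz function, as a Schwartz function. It turns
frequency cutoffs into real convolution kernels. -/
noncomputable def reFourier (b : 𝓢(ℝ, ℂ)) : 𝓢(ℝ, ℝ) :=
  SchwartzMap.postcompCLM (𝕜 := ℝ) Complex.reCLM (𝓕 b)

lemma coe_reFourier (b : 𝓢(ℝ, ℂ)) : ⇑(reFourier b) = fun y => (𝓕 (b : ℝ → ℂ) y).re := rfl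

lemma integral_reFourier (b : 𝓢(ℝ, ℂ)) : ∫ y, reFourier b y = (b 0).re := by
  rw [← integral_fourier b]
  exact Complex.reCLM.integral_comp_comm (𝓕 b : 𝓢(ℝ, ℂ)).integrable

lemma deriv_deriv_reFourier (b : 𝓢(ℝ, ℂ)) (y : ℝ) :
    deriv (deriv (reFourier b)) y = (𝓕 (fun v : ℝ => -(2 * π * v : ℂ) ^ 2 * b v) y).re := by
  have hre : ∀ f : 𝓢(ℝ, ℂ), deriv (fun y => (f y).re) = fun y => (deriv f y).re := fun f =>
    funext fun y => (Complex.reCLM.hasFDerivAt.comp_hasDerivAt y (f.hasDerivAt y)).deriv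
  have hderiv : deriv (reFourier b) = fun y => (SchwartzMap.derivCLM ℝ ℂ (𝓕 b) y).re :=
    hre (𝓕 b)
  rw [hderiv, hre, ← deriv_deriv_fourier]
  rfl

lemma deriv_deriv_reFourier_add {c p : ℝ} {b w : 𝓢(ℝ, ℂ)}
    (hw : ∀ v : ℝ, msymb c (2 * π * v) * w v = (p ^ 2 - (2 * π * v) ^ 2) * b v) (y : ℝ) :
    deriv (deriv (reFourier b)) y + p ^ 2 * reFourier b y = Mop c (reFourier w) y := by
  have hint : Integrable fun v : ℝ => -(2 * π * v : ℂ) ^ 2 * b v := by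
    have hmeas : Continuous fun v : ℝ => -(2 * π * v : ℂ) ^ 2 * b v := by fun_prop
    refine (integrable_norm_iff hmeas.aestronglyMeasurable).1 ?_
    refine ((b.integrable_pow_mul volume 2).const_mul ((2 * π) ^ 2)).congr
      (ae_of_all _ fun v => ?_)
    simp [mul_pow, abs_of_pos pi_pos]
    ring
  have hsplit : (fun v : ℝ => (msymb c (2 * π * v) : ℂ) * w v)
      = (fun v : ℝ => -(2 * π * v : ℂ) ^ 2 * b v) + ((p ^ 2 : ℝ) : ℂ) • ⇑b := by
    ext v
    simp only [hw, Pi.add_apply, Pi.smul_apply, smul_eq_mul]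
    push_cast
    ring
  rw [coe_reFourier w, Mop_re_fourier c w.integrable, hsplit, fourier_add_smul hint b.integrable,
    deriv_deriv_reFourier, coe_reFourier]
  simp only [Pi.add_apply, Pi.smul_apply, smul_eq_mul, Complex.add_re, Complex.re_ofReal_mul]

lemma exists_hasCompactSupport_eq_comp_div {b : 𝓢(ℝ, ℂ)} (hb : HasCompactSupport b) {K : ℝ}
    (hK : 0 < K) : ∃ b' : 𝓢(ℝ, ℂ), HasCompactSupport b' ∧ ⇑b' = fun v => b (v / K) := by
  have hsupp : HasCompactSupport fun v : ℝ => b (v / K) :=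
    hb.comp_homeomorph (Homeomorph.mulRight₀ K⁻¹ (inv_ne_zero hK.ne'))
  have hsmooth : ContDiff ℝ ∞ fun v : ℝ => b (v / K) := b.smooth'.comp (contDiff_id.div_const K)
  exact ⟨hsupp.toSchwartzMap hsmooth, hsupp, rfl⟩

lemma integral_abs_mul_reFourier_comp_div {b b' : 𝓢(ℝ, ℂ)} {K : ℝ} (hK : 0 < K)
    (hb' : ⇑b' = fun v => b (v / K)) :
    ∫ y, |y| * |reFourier b' y| = K⁻¹ * ∫ y, |y| * |reFourier b y| := by
  rw [← abs_of_pos (inv_pos.2 hK), ← smul_eq_mul,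
    ← Measure.integral_comp_mul_left (fun y => |y| * |reFourier b y|)]
  congr 1 with y
  simp only [coe_reFourier, hb', fourier_comp_div _ hK, Complex.re_ofReal_mul, abs_mul]
  ring

lemma exists_hasCompactSupport_integral_abs_mul_reFourier_le {ε : ℝ} (hε : 0 < ε) :
    ∃ b : 𝓢(ℝ, ℂ), HasCompactSupport b ∧ b 0 = 1 ∧ ∫ y, |y| * |reFourier b y| ≤ ε := by
  let χ : ContDiffBump (0 : ℝ) := ⟨1, 2, one_pos, one_lt_two⟩
  have hsupp : HasCompactSupport fun v : ℝ => (χ v : ℂ) :=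
    χ.hasCompactSupport.comp_left Complex.ofReal_zero
  let b := hsupp.toSchwartzMap (Complex.ofRealCLM.contDiff.comp χ.contDiff)
  have hb0 : b 0 = 1 :=
    congrArg ((↑) : ℝ → ℂ) (χ.one_of_mem_closedBall (Metric.mem_closedBall_self zero_le_one))
  have hK : 0 < (∫ y, |y| * |reFourier b y|) / ε + 1 := by positivity
  obtain ⟨b', hb', hbb'⟩ := exists_hasCompactSupport_eq_comp_div (b := b) hsupp hK
  refine ⟨b', hb', by simpa [hbb'] using hb0, ?_⟩
  rw [integral_abs_mul_reFourier_comp_div hK hbb', inv_mul_le_iff₀ hK, add_mul,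
    div_mul_cancel₀ _ hε.ne']
  linarith

lemma exists_parametrix {c p : ℝ} (hp : p ≠ 0) (hmp : msymb c p = 0)
    (hm' : deriv (msymb c) p ≠ 0) (hroots : ∀ k, k ≠ p → k ≠ -p → msymb c k ≠ 0)
    {ε : ℝ} (hε : 0 < ε) :
    ∃ g h : 𝓢(ℝ, ℝ), ∫ y, g y = 1 ∧ ∫ y, |y| * |g y| ≤ ε ∧
      ∀ y, deriv (deriv g) y + p ^ 2 * g y = Mop c h y := by
  obtain ⟨v, hv, hvm⟩ := exists_contDiff_mul_msymb_eq hp hmp hm' hroots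
  obtain ⟨b, hb, hb0, hbε⟩ := exists_hasCompactSupport_integral_abs_mul_reFourier_le hε
  have hsupp : HasCompactSupport fun x : ℝ => (v (2 * π * x) : ℂ) * b x := hb.mul_left
  have hsmooth : ContDiff ℝ ∞ fun x : ℝ => (v (2 * π * x) : ℂ) * b x :=
    (Complex.ofRealCLM.contDiff.comp (hv.comp (contDiff_const.mul contDiff_id))).mul b.smooth'
  refine ⟨reFourier b, reFourier (hsupp.toSchwartzMap hsmooth), ?_, hbε,
    deriv_deriv_reFourier_add fun x => ?_⟩
  · rw [integral_reFourier, hb0, Complex.one_re]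
  · have hvmx := congrArg ((↑) : ℝ → ℂ) (hvm (2 * π * x))
    push_cast at hvmx
    rw [← hvmx]
    exact (mul_left_comm _ _ _).trans (mul_assoc _ _ _).symm

end Fourier

section LinearEstimate

open scoped Convolution SchwartzMap

variable {c p B : ℝ} {D G : ℝ → ℝ}

lemma abs_convolution_le_of_parametrix (hp : 0 < p) {g h : 𝓢(ℝ, ℝ)}
    (hgh : ∀ y, deriv (deriv g) y + p ^ 2 * g y = Mop c h y) (hD : Continuous D)
    (hB : ∀ x, |D x| ≤ B) (hD0 : Tendsto D atTop (𝓝 0)) (hG : Integrable G)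
    (hDG : Mop c D = Aop (Aop G)) (x : ℝ) :
    |(⇑g ⋆ D) x| ≤ (∫ y, |h y|) * (∫ y, |G y|) / p := by
  have hg' : Integrable (deriv g) := (SchwartzMap.derivCLM ℝ ℝ g).integrable
  have hg'' : Integrable (deriv (deriv g)) :=
    (SchwartzMap.derivCLM ℝ ℝ (SchwartzMap.derivCLM ℝ ℝ g)).integrable
  have hAAG := integrable_Aop (integrable_Aop hG)
  have hW : ∀ y, HasDerivAt (⇑g ⋆ D) ((deriv g ⋆ D) y) y :=
    hasDerivAt_convolution_of_bounded g.integrable hg' g.hasDerivAt hD hB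
  have hoscillator : deriv (deriv g) ⋆ D = ⇑h ⋆ Aop (Aop G) - p ^ 2 • (⇑g ⋆ D) := by
    rw [← hDG, convolution_Mop c h.integrable hD hB, eq_sub_iff_add_eq, ← smul_convolution,
      ← (convolutionExists_of_bounded hg'' hD hB).add_distrib
        (convolutionExists_of_bounded (g.integrable.smul (p ^ 2)) hD hB)]
    exact congrArg (· ⋆ D) (funext hgh)
  have hW' : ∀ y, HasDerivAt (deriv g ⋆ D)
      ((⇑h ⋆ Aop (Aop G)) y - p ^ 2 * (⇑g ⋆ D) y) y := fun y => by
    have hderiv := hasDerivAt_convolution_of_bounded hg' hg''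
      (SchwartzMap.derivCLM ℝ ℝ g).hasDerivAt hD hB y
    rwa [hoscillator] at hderiv
  calc |(⇑g ⋆ D) x| ≤ (∫ y, |(⇑h ⋆ Aop (Aop G)) y|) / p :=
        abs_le_of_oscillator hp (h.integrable.integrable_convolution _ hAAG) hW hW'
          (tendsto_convolution_atTop g.integrable hD hB hD0)
          (tendsto_convolution_atTop hg' hD hB hD0) x
    _ ≤ (∫ y, |h y|) * (∫ y, |G y|) / p := by
        gcongr
        exact (integral_abs_convolution_le h.integrable hAAG).trans (mul_le_mul_of_nonneg_left
          ((integral_abs_Aop_le (integrable_Aop hG)).trans (integral_abs_Aop_le hG))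
          (integral_nonneg fun y => abs_nonneg _))

lemma abs_sub_le_of_Mop_eq (hc : c ≠ 0) (hD : Continuous D) (hB : ∀ x, |D x| ≤ B)
    (hGc : Continuous G) (hG : Integrable G) (hDG : Mop c D = Aop (Aop G))
    (x y : ℝ) :
    |D x - D y| ≤ 2 * (B + ∫ z, |G z|) / c ^ 2 * |x - y| := by
  have hAAD := abs_Aop_sub_Aop_le (continuous_Aop hD) (fun z => abs_Aop_le fun y _ => hB y) x y
  have hAAG := abs_Aop_sub_Aop_le (continuous_Aop hGc) (abs_Aop_le_integral_abs hG) x y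
  have hdiff : c ^ 2 * (D x - D y)
      = (Aop (Aop D) x - Aop (Aop D) y) - (Aop (Aop G) x - Aop (Aop G) y) := by
    have hx := congrFun hDG x
    have hy := congrFun hDG y
    simp only [Mop] at hx hy
    linarith
  have hc2 : 0 < c ^ 2 := by positivity
  rw [div_mul_eq_mul_div, le_div_iff₀ hc2]
  calc |D x - D y| * c ^ 2 = |c ^ 2 * (D x - D y)| := by rw [abs_mul, abs_of_pos hc2, mul_comm]
    _ ≤ |Aop (Aop D) x - Aop (Aop D) y| + |Aop (Aop G) x - Aop (Aop G) y| := by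
        rw [hdiff]
        exact abs_sub _ _
    _ ≤ 2 * (B + ∫ z, |G z|) * |x - y| := by linarith

theorem exists_abs_le_integral_of_Mop_eq (hc : c ≠ 0) (hp : 0 < p) (hmp : msymb c p = 0)
    (hm' : deriv (msymb c) p ≠ 0) (hroots : ∀ k, k ≠ p → k ≠ -p → msymb c k ≠ 0) :
    ∃ C : ℝ, 0 ≤ C ∧ ∀ D G : ℝ → ℝ, Continuous D → (∃ B, ∀ x, |D x| ≤ B) →
      Tendsto D atTop (𝓝 0) → Continuous G → Integrable G → Mop c D = Aop (Aop G) →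
      ∀ x, |D x| ≤ C * ∫ y, |G y| := by
  obtain ⟨g, h, hg1, hgmom, hgh⟩ := exists_parametrix hp.ne' hmp hm' hroots
    (show 0 < c ^ 2 / 4 by positivity)
  refine ⟨2 * (∫ y, |h y|) / p + 1, by positivity, ?_⟩
  rintro D G hD ⟨B, hB⟩ hD0 hGc hG hDG x
  set γ := ∫ y, |G y|
  have hbdd : BddAbove (Set.range fun x => |D x|) := ⟨B, Set.forall_mem_range.2 hB⟩
  set N := ⨆ x, |D x|
  have hN : ∀ x, |D x| ≤ N := le_ciSup hbdd
  have hmom : Integrable fun y => |y| * |g y| := by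
    simpa only [pow_one, Real.norm_eq_abs] using g.integrable_pow_mul volume 1
  have hN0 : 0 ≤ N := (abs_nonneg _).trans (hN 0)
  have hlow := abs_convolution_le_of_parametrix hp hgh hD hB hD0 hG hDG
  have hhigh : ∀ x, |(⇑g ⋆ D) x - D x| ≤ (N + γ) / 2 := fun x =>
    calc |(⇑g ⋆ D) x - D x| ≤ 2 * (N + γ) / c ^ 2 * ∫ y, |y| * |g y| :=
          abs_convolution_sub_self_le g.integrable hg1 hmom hD hB
            (abs_sub_le_of_Mop_eq hc hD hN hGc hG hDG) x
      _ ≤ 2 * (N + γ) / c ^ 2 * (c ^ 2 / 4) := by gcongr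
      _ = (N + γ) / 2 := by field_simp; ring
  have habsorb : N ≤ (∫ y, |h y|) * γ / p + (N + γ) / 2 := ciSup_le fun x =>
    calc |D x| = |(⇑g ⋆ D) x - ((⇑g ⋆ D) x - D x)| := by rw [sub_sub_cancel]
      _ ≤ |(⇑g ⋆ D) x| + |(⇑g ⋆ D) x - D x| := abs_sub _ _
      _ ≤ (∫ y, |h y|) * γ / p + (N + γ) / 2 := add_le_add (hlow x) (hhigh x)
  calc |D x| ≤ N := hN x
    _ ≤ 2 * ((∫ y, |h y|) * γ / p) + γ := by linarith
    _ = (2 * (∫ y, |h y|) / p + 1) * γ := by ring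

theorem exists_abs_sub_le_integral_of_Mop_eq (hc : c ≠ 0) (hp : 0 < p) (hmp : msymb c p = 0)
    (hm' : deriv (msymb c) p ≠ 0) (hroots : ∀ k, k ≠ p → k ≠ -p → msymb c k ≠ 0) :
    ∃ Λ : ℝ, 0 ≤ Λ ∧ ∀ (D G : ℝ → ℝ) (l ν : ℝ), Continuous D → (∃ B, ∀ x, |D x| ≤ B) →
      Tendsto D atTop (𝓝 l) → Continuous G → Integrable G → Tendsto G atTop (𝓝 0) →
      (∀ x, Mop c D x = Aop (Aop G) x + ν) →
      ∀ x y, |D x - D y| ≤ Λ * (∫ z, |G z|) * |x - y| := by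
  obtain ⟨C, hC, hest⟩ := exists_abs_le_integral_of_Mop_eq hc hp hmp hm' hroots
  refine ⟨2 * (C + 1) / c ^ 2, by positivity, ?_⟩
  rintro D G l ν hD ⟨B, hB⟩ hl hGc hG hG0 hDG x y
  have hDl0 : Tendsto (fun x => D x - l) atTop (𝓝 0) := tendsto_sub_nhds_zero_iff.2 hl
  have hDl : Continuous fun x => D x - l := hD.sub continuous_const
  have hBl : ∀ x, |D x - l| ≤ B + |l| := fun x => (abs_sub _ _).trans (by gcongr; exact hB x)
  have hMop : ∀ x, Mop c (fun x => D x - l) x - Aop (Aop G) x = ν - (1 - c ^ 2) * l := fun x => by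
    simp only [Mop_sub c hD continuous_const, Mop_const, hDG]
    ring
  have hconst : ν - (1 - c ^ 2) * l = 0 := by
    have hlim := (tendsto_Mop_atTop c hDl0).sub (tendsto_Aop_atTop (tendsto_Aop_atTop hG0))
    simp only [hMop, sub_zero] at hlim
    exact tendsto_nhds_unique tendsto_const_nhds hlim
  have heq : Mop c (fun x => D x - l) = Aop (Aop G) := funext fun x => by
    rw [← sub_eq_zero, hMop, hconst]
  calc |D x - D y| = |(D x - l) - (D y - l)| := by rw [sub_sub_sub_cancel_right]
    _ ≤ 2 * (C * (∫ z, |G z|) + ∫ z, |G z|) / c ^ 2 * |x - y| :=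
        abs_sub_le_of_Mop_eq hc hDl (hest _ G hDl ⟨_, hBl⟩ hDl0 hGc hG heq) hGc hG heq x y
    _ = 2 * (C + 1) / c ^ 2 * (∫ z, |G z|) * |x - y| := by ring

end LinearEstimate

section TransitionWave

variable {c δ ε : ℝ} {ψ R R₁ R₂ : ℝ → ℝ}

/-- A bounded wave `R` for the nonlinearity `ψ` that passes between the phases `(-∞, -δ]` and
`[δ, ∞)` inside `[-ε, ε]`; the shift invariance is removed by `R 0 = 0`. -/
structure IsTransitionWave (c : ℝ) (ψ : ℝ → ℝ) (δ ε : ℝ) (R : ℝ → ℝ) : Prop where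
  continuous : Continuous R
  bounded : ∃ B, ∀ x, |R x| ≤ B
  map_zero : R 0 = 0
  wave_eq : ∃ μ, ∀ x, Mop c R x = Aop (Aop fun y => ψ (R y)) x + μ
  le_neg : ∀ x, x ≤ -ε → R x ≤ -δ
  le : ∀ x, ε ≤ x → δ ≤ R x

lemma IsTransitionWave.comp_eq_sign (hR : IsTransitionWave c ψ δ ε R) (hδ : 0 < δ)
    (hε : 0 < ε) (hψ : ∀ r, δ ≤ |r| → ψ r = Real.sign r) {x : ℝ} (hx : x ∉ Set.Icc (-ε) ε) :
    ψ (R x) = Real.sign x := by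
  rcases not_and_or.1 hx with hx | hx
  · have hRx := hR.le_neg x (not_le.1 hx).le
    rw [hψ _ (by linarith [neg_le_abs (R x)]), Real.sign_of_neg (by linarith),
      Real.sign_of_neg (by linarith)]
  · have hRx := hR.le x (not_le.1 hx).le
    rw [hψ _ (hRx.trans (le_abs_self _)), Real.sign_of_pos (by linarith),
      Real.sign_of_pos (by linarith)]

lemma integral_abs_le_of_support_subset_Icc {G : ℝ → ℝ} {b : ℝ} (hε : 0 ≤ ε)
    (hsupp : ∀ x, x ∉ Set.Icc (-ε) ε → G x = 0) (hb : ∀ x ∈ Set.Icc (-ε) ε, |G x| ≤ b) :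
    ∫ x, |G x| ≤ b * (2 * ε) := by
  calc ∫ x, |G x| = ∫ x in Set.Icc (-ε) ε, |G x| :=
        (setIntegral_eq_integral_of_forall_compl_eq_zero fun x hx => by
          rw [hsupp x hx, abs_zero]).symm
    _ ≤ b * volume.real (Set.Icc (-ε) ε) :=
        (le_abs_self _).trans <| norm_setIntegral_le_of_norm_le_const measure_Icc_lt_top
          fun x hx => (norm_abs_eq_norm (G x)).trans_le (hb x hx)
    _ = b * (2 * ε) := by rw [Real.volume_real_Icc_of_le (by linarith)]; ring

lemma IsTransitionWave.comp_sub_comp_eq_zero (hδ : 0 < δ) (hε : 0 < ε)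
    (hψ : ∀ r, δ ≤ |r| → ψ r = Real.sign r) (hR₁ : IsTransitionWave c ψ δ ε R₁)
    (hR₂ : IsTransitionWave c ψ δ ε R₂) {x : ℝ} (hx : x ∉ Set.Icc (-ε) ε) :
    ψ (R₁ x) - ψ (R₂ x) = 0 := by
  rw [hR₁.comp_eq_sign hδ hε hψ hx, hR₂.comp_eq_sign hδ hε hψ hx, sub_self]

lemma IsTransitionWave.eq_of_abs_sub_le {L : NNReal} {Λ : ℝ} (hδ : 0 < δ) (hε : 0 < ε)
    (hΛ : 0 ≤ Λ) (hL : LipschitzWith L ψ) (hψ : ∀ r, δ ≤ |r| → ψ r = Real.sign r)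
    (hsmall : 2 * L * Λ * ε ^ 2 < 1) (hR₁ : IsTransitionWave c ψ δ ε R₁)
    (hR₂ : IsTransitionWave c ψ δ ε R₂)
    (hlip : ∀ x y, |(R₁ x - R₂ x) - (R₁ y - R₂ y)|
      ≤ Λ * (∫ z, |ψ (R₁ z) - ψ (R₂ z)|) * |x - y|) :
    R₁ = R₂ := by
  set γ := ∫ z, |ψ (R₁ z) - ψ (R₂ z)|
  have hγ : 0 ≤ γ := integral_nonneg fun z => abs_nonneg _
  have hsub : ∀ x, |R₁ x - R₂ x| ≤ Λ * γ * |x| := fun x => by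
    simpa only [hR₁.map_zero, hR₂.map_zero, sub_zero] using hlip x 0
  have hsource : ∀ x ∈ Set.Icc (-ε) ε, |ψ (R₁ x) - ψ (R₂ x)| ≤ L * (Λ * γ * ε) := fun x hx =>
    calc |ψ (R₁ x) - ψ (R₂ x)| ≤ L * |R₁ x - R₂ x| := hL.dist_le_mul (R₁ x) (R₂ x)
      _ ≤ L * (Λ * γ * ε) := by
          gcongr
          exact (hsub x).trans (by gcongr; exact abs_le.2 hx)
  have hcontract : γ ≤ 2 * L * Λ * ε ^ 2 * γ :=
    calc γ ≤ L * (Λ * γ * ε) * (2 * ε) := integral_abs_le_of_support_subset_Icc hε.le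
          (fun x hx => hR₁.comp_sub_comp_eq_zero hδ hε hψ hR₂ hx) hsource
      _ = 2 * L * Λ * ε ^ 2 * γ := by ring
  have hγ0 : γ = 0 := by nlinarith
  refine funext fun x => sub_eq_zero.1 (abs_nonpos_iff.1 ?_)
  simpa only [hγ0, mul_zero, zero_mul] using hsub x

lemma IsTransitionWave.Mop_sub_eq (hψ : Continuous ψ) (hR₁ : IsTransitionWave c ψ δ ε R₁)
    (hR₂ : IsTransitionWave c ψ δ ε R₂) :
    ∃ ν, ∀ x, Mop c (fun y => R₁ y - R₂ y) x
      = Aop (Aop fun y => ψ (R₁ y) - ψ (R₂ y)) x + ν := by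
  obtain ⟨μ₁, hμ₁⟩ := hR₁.wave_eq
  obtain ⟨μ₂, hμ₂⟩ := hR₂.wave_eq
  have hψR₁ : Continuous fun y => ψ (R₁ y) := hψ.comp hR₁.continuous
  have hψR₂ : Continuous fun y => ψ (R₂ y) := hψ.comp hR₂.continuous
  refine ⟨μ₁ - μ₂, fun x => ?_⟩
  simp only [Mop_sub c hR₁.continuous hR₂.continuous, hμ₁, hμ₂, Aop_sub hψR₁ hψR₂,
    Aop_sub (continuous_Aop hψR₁) (continuous_Aop hψR₂)]
  ring

theorem IsTransitionWave.exists_forall_eq_of_tendsto_sub {p : ℝ} (hc : c ≠ 0) (hp : 0 < p)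
    (hmp : msymb c p = 0) (hm' : deriv (msymb c) p ≠ 0)
    (hroots : ∀ k, k ≠ p → k ≠ -p → msymb c k ≠ 0) :
    ∃ Λ : ℝ, ∀ (ψ : ℝ → ℝ) (L : NNReal) (δ ε l : ℝ) (R₁ R₂ : ℝ → ℝ), 0 < δ → 0 < ε →
      LipschitzWith L ψ → (∀ r, δ ≤ |r| → ψ r = Real.sign r) → 2 * L * Λ * ε ^ 2 < 1 →
      IsTransitionWave c ψ δ ε R₁ → IsTransitionWave c ψ δ ε R₂ →
      Tendsto (fun x => R₁ x - R₂ x) atTop (𝓝 l) → R₁ = R₂ := by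
  obtain ⟨Λ, hΛ, hest⟩ := exists_abs_sub_le_integral_of_Mop_eq hc hp hmp hm' hroots
  refine ⟨Λ, fun ψ L δ ε l R₁ R₂ hδ hε hL hψ hsmall hR₁ hR₂ hl => ?_⟩
  have hsupp : ∀ x, x ∉ Set.Icc (-ε) ε → ψ (R₁ x) - ψ (R₂ x) = 0 :=
    fun x hx => hR₁.comp_sub_comp_eq_zero hδ hε hψ hR₂ hx
  have hG : Continuous fun x => ψ (R₁ x) - ψ (R₂ x) :=
    (hL.continuous.comp hR₁.continuous).sub (hL.continuous.comp hR₂.continuous)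
  have hG_supp : HasCompactSupport fun x => ψ (R₁ x) - ψ (R₂ x) :=
    .intro isCompact_Icc hsupp
  have hG_tendsto : Tendsto (fun x => ψ (R₁ x) - ψ (R₂ x)) atTop (𝓝 0) :=
    tendsto_const_nhds.congr' <| (eventually_gt_atTop ε).mono fun x hx =>
      (hsupp x fun h => hx.not_ge h.2).symm
  obtain ⟨B₁, hB₁⟩ := hR₁.bounded
  obtain ⟨B₂, hB₂⟩ := hR₂.bounded
  obtain ⟨ν, hν⟩ := hR₁.Mop_sub_eq hL.continuous hR₂
  exact hR₁.eq_of_abs_sub_le hδ hε hΛ hL hψ hsmall hR₂ <|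
    hest _ _ l ν (hR₁.continuous.sub hR₂.continuous)
      ⟨B₁ + B₂, fun x => (abs_sub _ _).trans (add_le_add (hB₁ x) (hB₂ x))⟩ hl hG
      (hG.integrable_of_hasCompactSupport hG_supp) hG_tendsto hν

end TransitionWave

section Correctors

variable {c δ ε a b d CΨ : ℝ} {Ψ : ℝ → ℝ → ℝ} {R₀ S : ℝ → ℝ}

lemma eventually_mul_rpow_le_mul_rpow (C : ℝ) (hd : 0 < d) (hab : a < b) :
    ∀ᶠ δ : ℝ in 𝓝[>] 0, C * δ ^ b ≤ d * δ ^ a := by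
  have hlim : Tendsto (fun δ : ℝ => C * δ ^ (b - a)) (𝓝[>] 0) (𝓝 0) := by
    have hcont := (Real.continuousAt_rpow_const 0 (b - a) (.inr (sub_pos.2 hab).le)).tendsto
    rw [Real.zero_rpow (sub_pos.2 hab).ne'] at hcont
    simpa only [mul_zero] using (hcont.mono_left nhdsWithin_le_nhds).const_mul C
  filter_upwards [hlim.eventually_le_const hd, self_mem_nhdsWithin] with δ hle hδ
  calc C * δ ^ b = C * δ ^ (b - a) * δ ^ a := by
        rw [mul_assoc, ← Real.rpow_add hδ, sub_add_cancel]
    _ ≤ d * δ ^ a := mul_le_mul_of_nonneg_right hle (Real.rpow_nonneg (le_of_lt hδ) a)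

lemma AssumptionA.lipschitzWith_deriv (hA : AssumptionA Ψ CΨ) (hδ : 0 < δ) :
    LipschitzWith (CΨ / δ).toNNReal (deriv (Ψ δ)) := by
  obtain ⟨-, hΨ, -, -, hΨ''⟩ := hA.2 δ hδ
  refine lipschitzWith_of_nnnorm_deriv_le ?_ fun r => ?_
  · exact (hΨ.iterate_deriv' 1 1).differentiable one_ne_zero
  · exact NNReal.coe_le_coe.1 ((hΨ'' r).trans (Real.le_coe_toNNReal _))

lemma UnperturbedWave.deriv_zero_pos (hR₀ : UnperturbedWave c R₀) : 0 < deriv R₀ 0 := by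
  obtain ⟨-, -, -, x₀, r₀, d₀, hx₀, -, hd₀, -, -, hderiv⟩ := hR₀
  exact hd₀.trans (hderiv 0 (by rwa [abs_zero]))

lemma Admissible.isTransitionWave {ψ : ℝ → ℝ} (hS : Admissible δ R₀ S) (hR₀ : Differentiable ℝ R₀)
    (hR₀b : ∃ B, ∀ x, |R₀ x| ≤ B) (hR₀0 : R₀ 0 = 0) (hd : 0 < deriv R₀ 0)
    (hε : 2 * δ ≤ deriv R₀ 0 * ε)
    (hwave : ∃ μ, ∀ x, Mop c (fun y => R₀ y + S y) x
      = Aop (Aop fun y => ψ (R₀ y + S y)) x + μ) :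
    IsTransitionWave c ψ δ ε (fun y => R₀ y + S y) := by
  obtain ⟨⟨hSdiff, ⟨BS, hBS⟩, -⟩, hS0, xm, xp, hxm, hxp, hRm, hRp, hlt, hgt, hmono⟩ := hS
  obtain ⟨B, hB⟩ := hR₀b
  have hdiff : Differentiable ℝ fun y => R₀ y + S y := hR₀.add hSdiff
  have hslope : ∀ x ∈ Set.Icc xm xp, ∀ y ∈ Set.Icc xm xp, x ≤ y →
      deriv R₀ 0 / 2 * (y - x) ≤ (R₀ y + S y) - (R₀ x + S x) :=
    (convex_Icc xm xp).mul_sub_le_image_sub_of_le_deriv hdiff.continuous.continuousOn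
      hdiff.differentiableOn fun x hx => by
        rw [interior_Icc] at hx
        exact (hmono x hx.1 hx.2).1.le.trans_eq (deriv_fun_add (hR₀ x) (hSdiff x)).symm
  have hxp_le : xp ≤ ε := by
    have hcross := hslope 0 ⟨hxm.le, hxp.le⟩ xp ⟨(hxm.trans hxp).le, le_rfl⟩ hxp.le
    rw [hRp, hR₀0, hS0] at hcross
    exact le_of_mul_le_mul_left (by linarith) hd
  have hxm_ge : -ε ≤ xm := by
    have hcross := hslope xm ⟨le_rfl, (hxm.trans hxp).le⟩ 0 ⟨hxm.le, hxp.le⟩ hxm.le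
    rw [hRm, hR₀0, hS0] at hcross
    exact le_of_mul_le_mul_left (by linarith) hd
  refine ⟨hdiff.continuous, ⟨B + BS, fun x => ?_⟩, by rw [hR₀0, hS0, add_zero], hwave,
    fun x hx => ?_, fun x hx => ?_⟩
  · exact (abs_add_le _ _).trans (add_le_add (hB x) (hBS x).1)
  · rcases (hx.trans hxm_ge).eq_or_lt with rfl | hx
    exacts [hRm.le, (hlt x hx).le]
  · rcases (hxp_le.trans hx).eq_or_lt with rfl | hx
    exacts [hRp.ge, (hgt x hx).le]

end Correctors

theorem stmt16_general {c kc : ℝ} (hc : c ≠ 0) (hkc : 0 < kc) (hmkc : msymb c kc = 0)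
    (hm' : deriv (msymb c) kc ≠ 0) (hroots : ∀ k : ℝ, k ≠ kc → k ≠ -kc → msymb c k ≠ 0)
    {Ψ : ℝ → ℝ → ℝ} {CΨ : ℝ} (hA : AssumptionA Ψ CΨ) {R₀ : ℝ → ℝ} (hR₀ : Differentiable ℝ R₀)
    (hR₀b : ∃ B, ∀ x, |R₀ x| ≤ B) (hR₀0 : R₀ 0 = 0) (hd : 0 < deriv R₀ 0) {κ : ℝ}
    (hκ1 : 1 / 2 < κ) (hκ2 : κ < 1) :
    ∃ δκ : ℝ, 0 < δκ ∧ ∀ δ : ℝ, 0 < δ → δ < δκ → ∀ (R S : ℝ → ℝ) (l l' : ℝ),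
      IsTransitionWave c (deriv (Ψ δ)) δ (δ ^ κ) R →
      Tendsto (fun x => R x - R₀ x) atTop (𝓝 l) →
      Admissible δ R₀ S → Tendsto S atTop (𝓝 l') →
      (∃ μ, ∀ x, Mop c (fun y => R₀ y + S y) x
        = Aop (Aop fun y => deriv (Ψ δ) (R₀ y + S y)) x + μ) →
      ∀ x, R x = R₀ x + S x := by
  obtain ⟨Λ, huniq⟩ := IsTransitionWave.exists_forall_eq_of_tendsto_sub hc hkc hmkc hm' hroots
  obtain ⟨δκ, hδκ, hsmall⟩ := mem_nhdsGT_iff_exists_Ioo_subset.1 <|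
    (eventually_mul_rpow_le_mul_rpow 2 hd hκ2).and
      (eventually_mul_rpow_le_mul_rpow (2 * CΨ * Λ) one_half_pos
        (show 1 < 2 * κ by linarith))
  refine ⟨δκ, hδκ, fun δ hδ hδκ R S l l' hR hl hadm hl' hS => congrFun ?_⟩
  obtain ⟨hcross, hcontract⟩ := hsmall ⟨hδ, hδκ⟩
  rw [Real.rpow_one] at hcross hcontract
  have hS_wave := hadm.isTransitionWave hR₀ hR₀b hR₀0 hd hcross hS
  have hlim : Tendsto (fun x => R x - (R₀ x + S x)) atTop (𝓝 (l - l')) := by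
    simpa only [sub_sub] using hl.sub hl'
  have hcontract' : 2 * (CΨ / δ).toNNReal * Λ * (δ ^ κ) ^ 2 < 1 := by
    rw [Real.coe_toNNReal _ (div_nonneg hA.1.le hδ.le), ← Real.rpow_mul_natCast hδ.le]
    calc 2 * (CΨ / δ) * Λ * δ ^ (κ * (2 : ℕ)) = 2 * CΨ * Λ * δ ^ (2 * κ) / δ := by
          push_cast; rw [mul_comm κ]; ring
      _ ≤ 1 / 2 := (div_le_iff₀ hδ).2 hcontract
      _ < 1 := one_half_lt_one
  exact huniq _ _ _ _ _ _ _ hδ (Real.rpow_pos_of_pos hδ κ) (hA.lipschitzWith_deriv hδ)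
    (hA.2 δ hδ).2.2.1 hcontract' hR hS_wave hlim

/-- a phase transition wave `R` that has the same tail behaviour as `R₀`
at `+∞` and crosses the spinodal region inside `[-δ^κ, δ^κ]` coincides with `R₀ + S`
for every `δ`-admissible corrector `S ∈ X` solving the fixed point equation. -/
theorem stmt16 (c kc : ℝ) (hc0 : 0 < c) (hc1 : c < 1) (hkc : 0 < kc)
    (ha : symb kc = c) (hm' : deriv (msymb c) kc ≠ 0)
    (hroots : ∀ k : ℝ, k ≠ kc → k ≠ -kc → msymb c k ≠ 0)
    (Ψ : ℝ → ℝ → ℝ) (CΨ : ℝ) (hA : AssumptionA Ψ CΨ)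
    (hI : ∀ δ : ℝ, 0 < δ → Idelta Ψ δ = 0)
    (R₀ : ℝ → ℝ) (hR₀ : UnperturbedWave c R₀)
    (κ : ℝ) (hκ1 : 1 / 2 < κ) (hκ2 : κ < 1) :
    ∃ δκ : ℝ, 0 < δκ ∧
      ∀ δ : ℝ, 0 < δ → δ < δκ →
        ∀ (R : ℝ → ℝ) (μ : ℝ), IsW2inf R →
          (∀ x, Mop c R x = Aop (Aop (fun y => deriv (Ψ δ) (R y))) x + μ) →
          R 0 = 0 →
          (∃ l : ℝ, Tendsto (fun x => R x - R₀ x) atTop (nhds l)) →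
          (∀ x : ℝ, x ≤ -(δ ^ κ) → R x ≤ -δ) → (∀ x : ℝ, δ ^ κ ≤ x → δ ≤ R x) →
          ∀ S : ℝ → ℝ, IsX S → Admissible δ R₀ S →
            (∃ μ' : ℝ, ∀ x, Mop c (fun y => R₀ y + S y) x
                = Aop (Aop (fun y => deriv (Ψ δ) (R₀ y + S y))) x + μ') →
            ∀ x, R x = R₀ x + S x := by
  obtain ⟨hR₀diff, ⟨B, hB⟩, -⟩ := hR₀.1
  obtain ⟨δκ, hδκ, huniq⟩ := stmt16_general hc0.ne' hkc (by rw [msymb, ha, sub_self]) hm' hroots hA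
    hR₀diff ⟨B, fun x => (hB x).1⟩ hR₀.2.1 hR₀.deriv_zero_pos hκ1 hκ2
  refine ⟨δκ, hδκ, ?_⟩
  rintro δ hδ hδκ R μ ⟨hR, ⟨B', hB'⟩, -⟩ hwave hR0 ⟨l, hl⟩ hneg hpos S ⟨-, -, l', hl'⟩ hadm
  exact huniq δ hδ hδκ R S l l'
    ⟨hR.continuous, ⟨B', fun x => (hB' x).1⟩, hR0, ⟨μ, hwave⟩, hneg, hpos⟩ hl hadm hl'
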